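/- Let p, q > 2 be real numbers with log p / log q = n₀/m₀ where n₀, m₀ are coprime positive integers, and set α = 1/p, β = 1/q. If λ = q(p−1)/(p(q−1)) and (m₀ + n₀)·log 2 + log(3/4) < m₀·log p, then the Lebesgue measure of C_α − λ·C_β is zero. -/

import Mathlib

/-!
Put `a = 1/p`, `b = 1/q`. The given `l` equals `(1 - a) / (1 - b)`, so `C_a - l C_b = (1 - a) T`,
where `T` is the set of all `∑ εₖ aᵏ - ∑ δₖ bᵏ` with digits in `{0, 1}`. The hypothesis on
logarithms says `p ^ m₀ = q ^ n₀ =: R`. Splitting off the first `m₀` digits of the first series and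
the first `n₀` digits of the second therefore gives `T ⊆ ⋃ d, (d + R⁻¹ T)`, where `d` ranges over
the differences of the two initial segments. The leading digits enter only through
`ε₀ - δ₀ ∈ {-1, 0, 1}`, so there are at most `3 * 2 ^ (m₀ - 1) * 2 ^ (n₀ - 1) = (3/4) 2 ^ (m₀ + n₀)`
values of `d`, and `hsize` says that this number is less than `R`. Since `T` is bounded, its measure
is finite, and `vol T ≤ (3/4) 2 ^ (m₀ + n₀) R⁻¹ vol T` forces `vol T = 0`.
-/

open Set MeasureTheory

/-- The middle Cantor set `C_a`, for `0 < a < 1/2`: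
`C_a = { (1-a) * ∑ εₖ aᵏ : εₖ ∈ {0,1} }`. -/
noncomputable def middleCantor (a : ℝ) : Set ℝ :=
  {x : ℝ | ∃ ε : ℕ → Bool, x = (1 - a) * ∑' k : ℕ, (if ε k then a ^ k else 0)}

/-- The arithmetic difference `C_a - l · C_b`. -/
noncomputable def diffSet (a b l : ℝ) : Set ℝ :=
  {z : ℝ | ∃ x ∈ middleCantor a, ∃ y ∈ middleCantor b, z = x - l * y}

open scoped Pointwise

/-- The value `∑ εₖ aᵏ` of a sequence of binary digits in base `1/a`. -/
noncomputable def digitSum (a : ℝ) (ε : ℕ → Bool) : ℝ :=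
  ∑' k : ℕ, (if ε k then a ^ k else 0)

/-- The unnormalised difference set `{∑ εₖ aᵏ - ∑ δₖ bᵏ}`. -/
def digitDiff (a b : ℝ) : Set ℝ :=
  {z : ℝ | ∃ ε δ : ℕ → Bool, z = digitSum a ε - digitSum b δ}

lemma summable_digits {a : ℝ} (ha : 0 ≤ a) (ha1 : a < 1) (ε : ℕ → Bool) :
    Summable fun k : ℕ => (if ε k then a ^ k else 0) := by
  refine Summable.of_nonneg_of_le (fun k => ?_) (fun k => ?_)
    (summable_geometric_of_lt_one ha ha1)
  · split_ifs <;> positivity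
  · split_ifs
    · exact le_rfl
    · positivity

lemma digitSum_mem_Icc {a : ℝ} (ha : 0 ≤ a) (ha1 : a < 1) (ε : ℕ → Bool) :
    digitSum a ε ∈ Icc 0 (1 - a)⁻¹ := by
  constructor
  · refine tsum_nonneg fun k => ?_
    split_ifs <;> positivity
  · rw [← tsum_geometric_of_lt_one ha ha1]
    refine (summable_digits ha ha1 ε).tsum_le_tsum (fun k => ?_)
      (summable_geometric_of_lt_one ha ha1)
    split_ifs
    · exact le_rfl
    · positivity

/-- Splitting off the leading digit and the `m` digits after it. -/
lemma digitSum_split {a : ℝ} (ha : 0 ≤ a) (ha1 : a < 1) (ε : ℕ → Bool) (m : ℕ) :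
    digitSum a ε = (if ε 0 then 1 else 0)
      + (∑ r : Fin m, if ε (r + 1) then a ^ ((r : ℕ) + 1) else 0)
      + a ^ (m + 1) * digitSum a (fun k => ε (k + (m + 1))) := by
  have h := (summable_digits ha ha1 ε).sum_add_tsum_nat_add (m + 1)
  unfold digitSum
  rw [← h, Finset.sum_range_succ', Finset.sum_range, ← tsum_mul_left]
  have h2 : ∀ k : ℕ, a ^ (m + 1) * (if ε (k + (m + 1)) then a ^ k else 0)
      = if ε (k + (m + 1)) then a ^ (k + (m + 1)) else 0 := by
    intro k
    split_ifs
    · ring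
    · simp
  simp only [h2, pow_zero]
  ring

lemma volume_digitDiff_ne_top {a b : ℝ} (ha : 0 ≤ a) (ha1 : a < 1) (hb : 0 ≤ b) (hb1 : b < 1) :
    volume (digitDiff a b) ≠ ⊤ := by
  suffices h : digitDiff a b ⊆ Icc (-(1 - b)⁻¹) (1 - a)⁻¹ from
    measure_ne_top_of_subset h isCompact_Icc.measure_ne_top
  rintro z ⟨ε, δ, rfl⟩
  have h1 := digitSum_mem_Icc ha ha1 ε
  have h2 := digitSum_mem_Icc hb hb1 δ
  constructor <;> linarith [h1.1, h1.2, h2.1, h2.2]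

/-- The translations of the covering of `digitDiff a b` by copies of itself. The `Fin 3` component
encodes the difference of the two leading digits, shifted by one. -/
noncomputable def blockShift (a b : ℝ) (m n : ℕ)
    (i : Fin 3 × (Fin m → Bool) × (Fin n → Bool)) : ℝ :=
  ((i.1 : ℕ) : ℝ) - 1 + (∑ r : Fin m, if i.2.1 r then a ^ ((r : ℕ) + 1) else 0)
    - ∑ s : Fin n, if i.2.2 s then b ^ ((s : ℕ) + 1) else 0

lemma digitDiff_subset {a b : ℝ} (ha : 0 ≤ a) (ha1 : a < 1) (hb : 0 ≤ b) (hb1 : b < 1)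
    {m n : ℕ} (hab : a ^ (m + 1) = b ^ (n + 1)) :
    digitDiff a b ⊆ ⋃ i, (fun x => blockShift a b m n i + x) ''
      ((fun x => a ^ (m + 1) * x) '' digitDiff a b) := by
  rintro z ⟨ε, δ, rfl⟩
  have hc : ∃ c : Fin 3, ((c : ℕ) : ℝ) - 1 = (if ε 0 then 1 else 0) - (if δ 0 then 1 else 0) := by
    cases ε 0 <;> cases δ 0
    · exact ⟨1, by norm_num⟩
    · exact ⟨0, by norm_num⟩
    · exact ⟨2, by norm_num⟩
    · exact ⟨1, by norm_num⟩
  obtain ⟨c, hc⟩ := hc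
  refine mem_iUnion.2 ⟨(c, fun r => ε (r + 1), fun s => δ (s + 1)), _, ⟨_,
    ⟨fun k => ε (k + (m + 1)), fun k => δ (k + (n + 1)), rfl⟩, rfl⟩, ?_⟩
  rw [digitSum_split ha ha1 ε m, digitSum_split hb hb1 δ n, ← hab]
  simp only [blockShift, hc]
  ring

/-- If the number of copies in the self-covering is less than the reciprocal of the contraction
ratio, the set is null. -/
lemma volume_digitDiff_eq_zero {a b : ℝ} (ha : 0 ≤ a) (ha1 : a < 1) (hb : 0 ≤ b) (hb1 : b < 1)
    {m n : ℕ} (hab : a ^ (m + 1) = b ^ (n + 1))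
    (hlt : (3 * (2 ^ m * 2 ^ n) : ℝ) * a ^ (m + 1) < 1) :
    volume (digitDiff a b) = 0 := by
  have hfin := volume_digitDiff_ne_top ha ha1 hb hb1
  have hle : volume (digitDiff a b)
      ≤ ENNReal.ofReal ((3 * (2 ^ m * 2 ^ n) : ℝ) * a ^ (m + 1)) * volume (digitDiff a b) := by
    calc volume (digitDiff a b)
        ≤ ∑ i, volume ((fun x => blockShift a b m n i + x) ''
            ((fun x => a ^ (m + 1) * x) '' digitDiff a b)) :=
          (measure_mono (digitDiff_subset ha ha1 hb hb1 hab)).trans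
            (measure_iUnion_fintype_le _ _)
      _ = ∑ i : Fin 3 × (Fin m → Bool) × (Fin n → Bool),
            ENNReal.ofReal (a ^ (m + 1)) * volume (digitDiff a b) := by
          refine Finset.sum_congr rfl fun i _ => ?_
          have h := Measure.addHaar_smul (volume : Measure ℝ) (a ^ (m + 1)) (digitDiff a b)
          rw [Module.finrank_self, pow_one, abs_of_nonneg (by positivity)] at h
          rw [image_add_left, measure_preimage_add]
          exact h
      _ = _ := by
          rw [Finset.sum_const, nsmul_eq_mul, ← mul_assoc,
            ENNReal.ofReal_mul (by positivity : (0 : ℝ) ≤ 3 * (2 ^ m * 2 ^ n))]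
          congr 2
          have : (3 * (2 ^ m * 2 ^ n) : ℝ) = ((3 * (2 ^ m * 2 ^ n) : ℕ) : ℝ) := by push_cast; rfl
          rw [this, ENNReal.ofReal_natCast]
          simp
  by_contra h0
  have : ENNReal.ofReal ((3 * (2 ^ m * 2 ^ n) : ℝ) * a ^ (m + 1)) * volume (digitDiff a b)
      < 1 * volume (digitDiff a b) :=
    ENNReal.mul_lt_mul_left h0 hfin (by rwa [ENNReal.ofReal_lt_one])
  rw [one_mul] at this
  exact absurd hle (not_le.2 this)

theorem stmt2 (p q : ℝ) (hp : 2 < p) (hq : 2 < q) (n₀ m₀ : ℕ)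
    (hn₀ : 0 < n₀) (hm₀ : 0 < m₀) (hcop : Nat.Coprime n₀ m₀)
    (hratio : Real.log p / Real.log q = (n₀ : ℝ) / (m₀ : ℝ))
    (l : ℝ) (hl : l = q * (p - 1) / (p * (q - 1)))
    (hsize : ((m₀ : ℝ) + (n₀ : ℝ)) * Real.log 2 + Real.log (3 / 4) < (m₀ : ℝ) * Real.log p) :
    volume (diffSet (1 / p) (1 / q) l) = 0 := by
  have hp0 : 0 < p := by linarith
  have hq0 : 0 < q := by linarith
  have hpow : p ^ m₀ = q ^ n₀ := by
    have hlq : 0 < Real.log q := Real.log_pos (by linarith)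
    have hm : (0 : ℝ) < m₀ := by exact_mod_cast hm₀
    rw [div_eq_div_iff hlq.ne' hm.ne'] at hratio
    apply Real.log_injOn_pos (mem_Ioi.2 (by positivity)) (mem_Ioi.2 (by positivity))
    rw [Real.log_pow, Real.log_pow]
    linarith
  have hcount : (2 : ℝ) ^ (m₀ + n₀) * (3 / 4) < p ^ m₀ := by
    rw [← Real.log_lt_log_iff (by positivity) (by positivity),
      Real.log_mul (by positivity) (by norm_num), Real.log_pow, Real.log_pow]
    push_cast
    exact hsize
  obtain ⟨m, rfl⟩ : ∃ m, m₀ = m + 1 := ⟨m₀ - 1, by omega⟩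
  obtain ⟨n, rfl⟩ : ∃ n, n₀ = n + 1 := ⟨n₀ - 1, by omega⟩
  have hnull : volume (digitDiff (1 / p) (1 / q)) = 0 := by
    refine volume_digitDiff_eq_zero (m := m) (n := n) (by positivity)
      (by rw [div_lt_one hp0]; linarith) (by positivity) (by rw [div_lt_one hq0]; linarith) ?_ ?_
    · rw [div_pow, div_pow, hpow, one_pow, one_pow]
    · rw [div_pow, one_pow, mul_one_div, div_lt_one (by positivity)]
      calc (3 * (2 ^ m * 2 ^ n) : ℝ) = 2 ^ (m + 1 + (n + 1)) * (3 / 4) := by ring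
        _ < _ := hcount
  have hsub : diffSet (1 / p) (1 / q) l ⊆ (1 - 1 / p) • digitDiff (1 / p) (1 / q) := by
    rintro z ⟨x, ⟨ε, rfl⟩, y, ⟨δ, rfl⟩, rfl⟩
    refine ⟨_, ⟨ε, δ, rfl⟩, ?_⟩
    have hl' : l * (1 - 1 / q) = 1 - 1 / p := by
      have : q - 1 ≠ 0 := by linarith
      rw [hl]
      field_simp
    rw [← mul_assoc, hl']
    simp only [smul_eq_mul, digitSum]
    ring
  refine measure_mono_null hsub ?_
  rw [Measure.addHaar_smul, hnull, mul_zero]
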